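/- arXiv:0803.1519 — 7 statements merged into one kernel-verified Lean document; each statement's English description precedes it below -/
import Mathlib

section
/- Let k be a totally real number field in which the rational prime 2 is unramified (equivalently, 2 does not divide the discriminant of k), and let K = k(i) be the totally imaginary quadratic extension of k obtained by adjoining a square root i of −1. Then every unit ε of the ring of integers R_K satisfies N_{K/k}(ε) = η² for some unit η of the ring of integers R_k; in other words, the index |R_K^* : R_K^{*(2)}| = 1, where R_K^{*(2)} = { x ∈ R_K^* : N_{K/k}(x) ∈ (R_k^*)² }. -/
open NumberField

/-!
Let `u = N(ε)`. Under every complex embedding `φ` of `K` one has `|φ ε|² = φ u`, because `φ` is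
real on `k` and `φ i = ± I`; hence the algebraic integer `ζ = ε² / u` (which is `ε` divided by its
conjugate) has all its absolute values equal to `1`, and by Kronecker it is a root of unity.

Everything else rests on `two_mul_sq_ne_unit`: since `2` is unramified in `k`, no `2 x²` with
`x ∈ k` is a unit of `𝓞 k`. It shows first that `K` contains no primitive 8th root of unity
(`pow_four_eq_one`). Passing from `ε` to an odd power `ε ^ m`, whose norm is a square if and only
if that of `ε` is, one may therefore assume `ζ ^ 4 = 1`. Writing
`ε ^ m = x + y i`, the cases `ζ = 1, -1, ± i` give `N(ε ^ m) = x²`, `y²`, `2 x²` respectively, and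
the last one is impossible by the same lemma.
-/

/-- If `2` is unramified in `k`, the principal ideal `(2)` is not the square of a fractional
principal ideal: at a prime above `2`, the valuation of `2` is `1`, whereas that of `x²` is even. -/
lemma two_mul_sq_ne_unit {k : Type*} [Field k] [NumberField k]
    (h2 : ¬ ((2 : ℤ) ∣ NumberField.discr k)) (x : k) (u : (𝓞 k)ˣ) :
    2 * x ^ 2 ≠ ((u : 𝓞 k) : k) := by
  intro h
  -- `2 x` is an algebraic integer, since its square is `2 u`
  have hy : (2 * x) ^ 2 = ((2 * (u : 𝓞 k) : 𝓞 k) : k) := by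
    rw [RingOfIntegers.coe_eq_algebraMap, map_mul, map_ofNat, ← RingOfIntegers.coe_eq_algebraMap,
      ← h]
    ring
  have hint : IsIntegral ℤ (2 * x) := by
    refine IsIntegral.of_pow (n := 2) (by norm_num) ?_
    rw [hy]
    exact RingOfIntegers.isIntegral_coe _
  obtain ⟨y, hyx⟩ : ∃ y : 𝓞 k, (y : k) = 2 * x := ⟨⟨2 * x, hint⟩, rfl⟩
  have hy2 : y ^ 2 = 2 * (u : 𝓞 k) := by
    apply RingOfIntegers.coe_injective
    rw [map_pow]
    exact (congrArg (· ^ 2) hyx).trans hy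
  have hmax : (Ideal.span {(2 : ℤ)}).IsMaximal :=
    PrincipalIdealRing.isMaximal_of_irreducible Int.prime_two.irreducible
  obtain ⟨P, hP, hPl⟩ :=
    Ideal.exists_maximal_ideal_liesOver_of_isIntegral (S := 𝓞 k) (Ideal.span {(2 : ℤ)})
  have hunr := (NumberField.not_dvd_discr_iff_forall_liesOver k (𝓞 k) Int.prime_two).1 h2 P hP hPl
  have hle : (Ideal.span {(2 : ℤ)}).map (algebraMap ℤ (𝓞 k)) ≤ P :=
    Ideal.map_le_iff_le_comap.2 (Ideal.over_def P (Ideal.span {(2 : ℤ)})).le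
  have h2P : (2 : 𝓞 k) ∈ P := by
    apply hle
    rw [Ideal.map_span]
    exact Ideal.subset_span (by simp)
  have hyP : y ∈ P := by
    apply hP.isPrime.mem_of_pow_mem 2
    rw [hy2]
    exact P.mul_mem_right _ h2P
  have he : (Ideal.span {(2 : ℤ)}).ramificationIdx' P ≠ 1 := by
    rw [Ideal.ramificationIdx'_ne_one_iff hle, Ideal.map_span, Ideal.span_le]
    rintro _ ⟨_, rfl, rfl⟩
    have : (2 : 𝓞 k) = y ^ 2 * ((u⁻¹ : (𝓞 k)ˣ) : 𝓞 k) := by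
      rw [hy2, mul_assoc, Units.mul_inv, mul_one]
    have hmem : (2 : 𝓞 k) ∈ P ^ 2 := by
      rw [this]
      exact Ideal.mul_mem_right _ _ (Ideal.pow_mem_pow hyP 2)
    simpa using hmem
  apply he
  rw [Ideal.ramificationIdx'_eq_ramificationIdx _ _ (by simp)]
  exact Ideal.ramificationIdx_eq_one_iff.2 hunr

section

variable {k K : Type*} [Field k] [Field K] [Algebra k K] {i : K}

lemma exists_coords (hi : i ^ 2 = -1) (hgen : Algebra.adjoin k ({i} : Set K) = ⊤) (z : K) :
    ∃ x y : k, z = algebraMap k K x + algebraMap k K y * i := by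
  have hz : z ∈ Algebra.adjoin k ({i} : Set K) := hgen ▸ Algebra.mem_top
  induction hz using Algebra.adjoin_induction with
  | mem a ha => exact ⟨0, 1, by simp_all⟩
  | algebraMap r => exact ⟨r, 0, by simp⟩
  | add a b _ _ ha hb =>
    obtain ⟨x, y, rfl⟩ := ha
    obtain ⟨x', y', rfl⟩ := hb
    exact ⟨x + x', y + y', by simp only [map_add]; ring⟩
  | mul a b _ _ ha hb =>
    obtain ⟨x, y, rfl⟩ := ha
    obtain ⟨x', y', rfl⟩ := hb
    refine ⟨x * x' - y * y', x * y' + y * x', ?_⟩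
    simp only [map_add, map_mul, map_sub]
    linear_combination algebraMap k K y * algebraMap k K y' * hi

lemma coords_unique (hk : ∀ c : k, c ^ 2 ≠ -1) (hi : i ^ 2 = -1) {x y x' y' : k}
    (h : algebraMap k K x + algebraMap k K y * i = algebraMap k K x' + algebraMap k K y' * i) :
    x = x' ∧ y = y' := by
  have hinj := (algebraMap k K).injective
  have hy : y = y' := by
    by_contra hne
    have hne' : y - y' ≠ 0 := sub_ne_zero.2 hne
    have hne2 : algebraMap k K y - algebraMap k K y' ≠ 0 := by
      rw [← map_sub]
      exact (map_ne_zero _).2 hne'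
    apply hk ((x' - x) / (y - y'))
    apply hinj
    have : algebraMap k K ((x' - x) / (y - y')) = i := by
      rw [map_div₀, map_sub, map_sub, div_eq_iff hne2]
      linear_combination -h
    rw [map_pow, this, hi]
    simp
  subst hy
  exact ⟨hinj (add_right_cancel h), rfl⟩

lemma norm_coords (hk : ∀ c : k, c ^ 2 ≠ -1) (hi : i ^ 2 = -1)
    (hdeg : Module.finrank k K = 2) (x y : k) :
    Algebra.norm k (algebraMap k K x + algebraMap k K y * i) = x ^ 2 + y ^ 2 := by
  have hli : LinearIndependent k ![(1 : K), i] := by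
    rw [LinearIndependent.pair_iff]
    intro s t hst
    apply coords_unique hk hi (x' := 0) (y' := 0)
    simpa [Algebra.smul_def] using hst
  let b := basisOfLinearIndependentOfCardEqFinrank hli (by simp [hdeg])
  have hb0 : b 0 = 1 := by simp [b]
  have hb1 : b 1 = i := by simp [b]
  have key : Algebra.lmul k K (algebraMap k K x + algebraMap k K y * i)
      = Matrix.toLin b b !![x, -y; y, x] := by
    apply b.ext
    intro j
    rw [Matrix.toLin_self]
    fin_cases j
    · simp [Fin.sum_univ_two, hb0, hb1, Algebra.smul_def]
    · simp [Fin.sum_univ_two, hb0, hb1, Algebra.smul_def]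
      linear_combination algebraMap k K y * hi
  rw [Algebra.norm_apply]
  change LinearMap.det (Algebra.lmul k K _) = _
  rw [key, LinearMap.det_toLin, Matrix.det_fin_two_of]
  ring

/-- If no `2 x²` is `± 1`, then `k(i)` contains no primitive 8th root of unity, so its roots of
unity of `2`-power order are `± 1, ± i`. -/
lemma pow_four_eq_one (hk : ∀ c : k, c ^ 2 ≠ -1) (hi : i ^ 2 = -1)
    (hgen : Algebra.adjoin k ({i} : Set K) = ⊤)
    (h1 : ∀ x : k, 2 * x ^ 2 ≠ 1) (h1' : ∀ x : k, 2 * x ^ 2 ≠ -1) (a : ℕ) :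
    ∀ z : K, z ^ (2 ^ a) = 1 → z ^ 4 = 1 := by
  induction a with
  | zero => intro z hz; simp_all
  | succ a ih =>
    intro z hz
    have h8 : (z ^ 2) ^ 4 = 1 := ih _ (by rw [← pow_mul, ← pow_succ', hz])
    have h8' : (z ^ 4 - 1) * (z ^ 4 + 1) = 0 := by linear_combination h8
    rcases mul_eq_zero.1 h8' with h | h
    · linear_combination h
    exfalso
    obtain ⟨x, y, rfl⟩ := exists_coords hi hgen z
    set z := algebraMap k K x + algebraMap k K y * i with hzdef
    have hsq : z ^ 2 = algebraMap k K (x ^ 2 - y ^ 2) + algebraMap k K (2 * x * y) * i := by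
      simp only [map_sub, map_mul, map_pow, map_ofNat, hzdef]
      linear_combination algebraMap k K y ^ 2 * hi
    have hpm : (z ^ 2 - i) * (z ^ 2 + i) = 0 := by linear_combination h - hi
    have key : ∀ s : k, z ^ 2 = algebraMap k K s * i → s = 1 ∨ s = -1 → False := by
      intro s hs hs1
      obtain ⟨e1, e2⟩ := coords_unique (x' := 0) (y' := s) hk hi
        (hsq.symm.trans (by simpa using hs))
      have e3 : (x - y) * (x + y) = 0 := by linear_combination e1
      rcases mul_eq_zero.1 e3 with e | e
      · have : 2 * x ^ 2 = s := by linear_combination e2 + 2 * x * e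
        rcases hs1 with rfl | rfl
        · exact h1 _ this
        · exact h1' _ this
      · have : 2 * x ^ 2 = -s := by linear_combination -e2 + 2 * x * e
        rcases hs1 with rfl | rfl
        · exact h1' _ this
        · exact h1 x (by simpa using this)
    rcases mul_eq_zero.1 hpm with e | e
    · exact key 1 (by simpa using sub_eq_zero.1 e) (.inl rfl)
    · exact key (-1) (by simpa using eq_neg_of_add_eq_zero_left e) (.inr rfl)

end

/-- Complex conjugation acts on the image of `K` by `i ↦ -i`, so `|φ z|² = φ (N z)`. -/
lemma norm_embedding_sq {k K : Type*} [Field k] [Field K] [Algebra k K] {i : K}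
    (htr : ∀ φ : k →+* ℂ, ∀ x : k, (φ x).im = 0) (hi : i ^ 2 = -1) (φ : K →+* ℂ) (x y : k) :
    ((‖φ (algebraMap k K x + algebraMap k K y * i)‖ ^ 2 : ℝ) : ℂ)
      = φ (algebraMap k K (x ^ 2 + y ^ 2)) := by
  have hx := htr (φ.comp (algebraMap k K)) x
  have hy := htr (φ.comp (algebraMap k K)) y
  simp only [RingHom.comp_apply] at hx hy
  have hx' := Complex.conj_eq_iff_im.2 hx
  have hy' := Complex.conj_eq_iff_im.2 hy
  have hφi : φ i ^ 2 = -1 := by rw [← map_pow, hi]; simp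
  have hII : (φ i - Complex.I) * (φ i + Complex.I) = 0 := by
    linear_combination hφi - Complex.I_sq
  have hconj : (starRingEnd ℂ) (φ i) = - φ i := by
    rcases mul_eq_zero.1 hII with e | e
    · rw [sub_eq_zero.1 e, Complex.conj_I]
    · rw [eq_neg_of_add_eq_zero_left e, map_neg, Complex.conj_I]
  rw [Complex.ofReal_pow, ← Complex.mul_conj']
  simp only [map_add, map_mul, map_pow, hx', hy', hconj]
  linear_combination - φ (algebraMap k K y) ^ 2 * hφi

/-- Let `k` be a totally real number field in which 2 is unramified (2 does not divide the
discriminant of `k`), and let `K = k(i)` be the quadratic extension obtained by adjoining a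
square root `i` of `-1`.  Then every unit `ε` of `𝓞 K` satisfies `N_{K/k}(ε) = η ^ 2` for some
unit `η` of `𝓞 k`. -/
theorem units_norm_sq_adjoin_i
    (k K : Type*) [Field k] [NumberField k] [Field K] [NumberField K] [Algebra k K]
    (htr : ∀ φ : k →+* ℂ, ∀ x : k, (φ x).im = 0)
    (h2 : ¬ ((2 : ℤ) ∣ NumberField.discr k))
    (i : K) (hi : i ^ 2 = -1)
    (hgen : Algebra.adjoin k ({i} : Set K) = ⊤)
    (hdeg : Module.finrank k K = 2) :
    ∀ ε : (𝓞 K)ˣ, ∃ η : (𝓞 k)ˣ,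
      RingOfIntegers.norm k (ε : 𝓞 K) = (η : 𝓞 k) ^ 2 := by
  intro ε
  have hk : ∀ c : k, c ^ 2 ≠ -1 := by
    intro c hc
    obtain ⟨φ⟩ : Nonempty (k →+* ℂ) := inferInstance
    have him := htr φ c
    have h : φ c ^ 2 = -1 := by rw [← map_pow, hc]; simp
    have hre := congrArg Complex.re h
    simp only [pow_two, Complex.mul_re, him, Complex.neg_re, Complex.one_re] at hre
    nlinarith [mul_self_nonneg (φ c).re]
  have hno := two_mul_sq_ne_unit h2
  let U : (𝓞 k)ˣ := Units.map (RingOfIntegers.norm k) ε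
  have hU : ((U : 𝓞 k) : k) = Algebra.norm k ((ε : 𝓞 K) : K) := rfl
  set u : k := ((U : 𝓞 k) : k) with hu
  set e : K := ((ε : 𝓞 K) : K) with he
  have hu0 : u ≠ 0 := by simp [hu]
  have hau0 : algebraMap k K u ≠ 0 := by simpa using hu0
  have habs : ∀ φ : K →+* ℂ, ((‖φ e‖ ^ 2 : ℝ) : ℂ) = φ (algebraMap k K u) := by
    intro φ
    obtain ⟨x, y, hxy⟩ := exists_coords hi hgen e
    rw [hU, hxy, norm_coords hk hi hdeg, norm_embedding_sq htr hi]
  obtain ⟨n, hn, hζ⟩ : ∃ n : ℕ, 0 < n ∧ (e ^ 2 / algebraMap k K u) ^ n = 1 := by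
    have hζint : IsIntegral ℤ (e ^ 2 / algebraMap k K u) := by
      have : e ^ 2 / algebraMap k K u =
          e ^ 2 * algebraMap k K (((U⁻¹ : (𝓞 k)ˣ) : 𝓞 k) : k) := by
        rw [div_eq_iff hau0, mul_assoc, ← map_mul, hu, ← map_mul, Units.inv_mul]
        simp
      rw [this]
      exact ((RingOfIntegers.isIntegral_coe _).pow 2).mul
        (map_isIntegral_int (algebraMap k K) (RingOfIntegers.isIntegral_coe _))
    have hζabs : ∀ φ : K →+* ℂ, ‖φ (e ^ 2 / algebraMap k K u)‖ = 1 := by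
      intro φ
      have h := congrArg norm (habs φ)
      rw [Complex.norm_real, Real.norm_of_nonneg (by positivity)] at h
      have h0 : ‖φ (algebraMap k K u)‖ ≠ 0 := by simpa using hu0
      rw [map_div₀, map_pow, norm_div, norm_pow, h, div_self h0]
    obtain ⟨n, hn, h⟩ := NumberField.Embeddings.pow_eq_one_of_norm_eq_one K ℂ hζint hζabs
    exact ⟨n, hn, h⟩
  obtain ⟨a, m, hm, rfl⟩ := Nat.exists_eq_two_pow_mul_odd hn.ne'
  have h4 := pow_four_eq_one hk hi hgen (fun x h => hno x 1 (by simpa using h))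
    (fun x h => hno x (-1) (by simpa using h)) a ((e ^ 2 / algebraMap k K u) ^ m)
    (by rw [← pow_mul, mul_comm, hζ])
  set w := (e ^ 2 / algebraMap k K u) ^ m with hw
  have hsq : (e ^ m) ^ 2 = algebraMap k K (u ^ m) * w := by
    rw [hw, div_pow, map_pow, ← pow_mul, ← pow_mul, mul_comm m 2]
    field_simp
  obtain ⟨x, y, hxy⟩ := exists_coords hi hgen (e ^ m)
  have hN : u ^ m = x ^ 2 + y ^ 2 := by
    rw [hU, ← map_pow, hxy, norm_coords hk hi hdeg]
  have hxysq : algebraMap k K (x ^ 2 - y ^ 2) + algebraMap k K (2 * x * y) * i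
      = algebraMap k K (u ^ m) * w := by
    rw [← hsq, hxy]
    simp only [map_sub, map_mul, map_pow, map_ofNat]
    linear_combination -algebraMap k K y ^ 2 * hi
  have hUm : ∀ x : k, 2 * x ^ 2 ≠ u ^ m := fun x h => hno x (U ^ m) (by simpa using h)
  have h20 : (2 : k) ≠ 0 := two_ne_zero
  -- for `w = ± i` the real part `x² - y²` vanishes, so the norm would be `2 x²`
  have hre : x ^ 2 - y ^ 2 ≠ 0 := fun h => hUm x (by linear_combination h - hN)
  have hsquare : ∃ t : k, u ^ m = t ^ 2 := by
    have hw4 : (w - 1) * ((w + 1) * ((w - i) * (w + i))) = 0 := by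
      linear_combination h4 + (1 - w ^ 2) * hi
    rcases mul_eq_zero.1 hw4 with h | h
    · obtain ⟨h1, -⟩ := coords_unique (x' := u ^ m) (y' := 0) hk hi
        (hxysq.trans (by rw [sub_eq_zero.1 h]; simp))
      refine ⟨x, ?_⟩
      apply mul_left_cancel₀ h20
      linear_combination hN - h1
    rcases mul_eq_zero.1 h with h | h
    · obtain ⟨h1, -⟩ := coords_unique (x' := -u ^ m) (y' := 0) hk hi
        (hxysq.trans (by rw [eq_neg_of_add_eq_zero_left h]; simp))
      refine ⟨y, ?_⟩
      apply mul_left_cancel₀ h20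
      linear_combination hN + h1
    rcases mul_eq_zero.1 h with h | h
    · exact absurd (coords_unique (x' := 0) (y' := u ^ m) hk hi
        (hxysq.trans (by rw [sub_eq_zero.1 h]; simp))).1 hre
    · exact absurd (coords_unique (x' := 0) (y' := -u ^ m) hk hi
        (hxysq.trans (by rw [eq_neg_of_add_eq_zero_left h]; simp))).1 hre
  obtain ⟨t, ht⟩ := hsquare
  obtain ⟨r, rfl⟩ := hm
  -- since `m = 2 r + 1`, the quotient `t / u ^ r` is a square root of `u` itself
  have hs : (t / u ^ r) ^ 2 = u := by
    rw [div_pow, ← ht, div_eq_iff (by positivity)]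
    ring
  have hsint : IsIntegral ℤ (t / u ^ r) := by
    refine IsIntegral.of_pow (n := 2) (by norm_num) ?_
    rw [hs]
    exact RingOfIntegers.isIntegral_coe _
  obtain ⟨s, hs'⟩ : ∃ s : 𝓞 k, (s : k) = t / u ^ r := ⟨⟨_, hsint⟩, rfl⟩
  have hs2 : (U : 𝓞 k) = s ^ 2 := by
    apply RingOfIntegers.coe_injective
    rw [map_pow]
    exact (hs.symm.trans (congrArg (· ^ 2) hs'.symm))
  have hsu : IsUnit s := (isUnit_pow_iff two_ne_zero).1 (hs2 ▸ U.isUnit)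
  exact ⟨hsu.unit, hs2⟩
end

section
/- Let k be a totally real number field in which the rational prime 3 is unramified (equivalently, 3 does not divide the discriminant of k), and let K = k(ω) be the totally imaginary quadratic extension of k obtained by adjoining a primitive cube root of unity ω. Then every unit ε of the ring of integers R_K satisfies N_{K/k}(ε) = η² for some unit η of the ring of integers R_k; in other words, the index |R_K^* : R_K^{*(2)}| = 1, where R_K^{*(2)} = { x ∈ R_K^* : N_{K/k}(x) ∈ (R_k^*)² }. -/
open NumberField

/-!
Let `σ` be the nontrivial automorphism of `K/k`. It acts as complex conjugation under every complex
embedding of `K`, so for a unit `ε` the quotient `ζ = ε / σ ε` has absolute value `1` everywhere and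
is a root of unity. If `ζ` has odd order then `ζ = ξ ^ 2` with `ξ` a power of `ζ`; since
`σ ζ = ζ⁻¹`, also `σ ξ = ξ⁻¹`, hence `r = ε / ξ` is fixed by `σ`, lies in `k`, and
`N(ε) = ε * σ ε = r ^ 2`.

The order of `ζ` is odd because of the ramification of `K/k` above `3`. Put `√-3 = 1 + 2ω`. Then
`ε - σ ε = b * √-3` with `b ∈ k`, and `c = 3 * b ^ 2 = -(ε - σ ε) ^ 2` is an integer of `k`. At a
prime `P` of `k` above `3` the valuation of `3` is `1`, so that of `c` is odd, and `c ∈ P`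
(`mem_of_sq_eq_three_mul`). Therefore `ε ≡ σ ε`, that is `ζ ≡ 1`, modulo every prime `Q` of `K`
above `3`. An even order would make `-1` a power of `ζ`, giving `2 ∈ Q`, which is absurd.
-/

/-- At a prime `P` above `3`, unramified by the discriminant hypothesis, `3 * c` can be a square
only if `c ∈ P`: otherwise its valuation would be `1`. -/
theorem mem_of_sq_eq_three_mul {k : Type*} [Field k] [NumberField k]
    (h3 : ¬ ((3 : ℤ) ∣ NumberField.discr k)) (P : Ideal (𝓞 k)) [hP : P.IsPrime]
    (h3P : (3 : 𝓞 k) ∈ P) {y c : 𝓞 k} (h : y ^ 2 = 3 * c) : c ∈ P := by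
  have hp : Prime (3 : ℤ) := Int.prime_three
  have hU : Algebra.IsUnramifiedAt ℤ P :=
    (not_dvd_discr_iff_forall_mem k (𝓞 k) hp).mp h3 P hP (by exact_mod_cast h3P)
  have hlo : P.LiesOver (Ideal.span {(3 : ℤ)}) :=
    (Ideal.liesOver_span_iff hP.ne_top hp).mpr (by simpa using h3P)
  have he : P.ramificationIdx ℤ = 1 := Ideal.ramificationIdx_eq_one P ℤ
  rw [← Ideal.ramificationIdx'_eq_ramificationIdx (Ideal.span {(3 : ℤ)}) P (by simp)] at he
  have h9 : (3 : 𝓞 k) ∉ P ^ 2 := by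
    intro h9
    refine (Ideal.ramificationIdx'_ne_one_iff (p := Ideal.span {(3 : ℤ)}) (P := P) ?_).mpr ?_ he
    · rw [Ideal.map_span, Ideal.span_le]
      simpa using h3P
    · rw [Ideal.map_span, Ideal.span_le]
      simpa using h9
  have hy : y ∈ P := hP.mem_of_pow_mem 2 (h ▸ P.mul_mem_right c h3P)
  have : c * 3 ∈ P ^ 2 := by
    rw [mul_comm, ← h]
    exact Ideal.pow_mem_pow hy 2
  exact (Ideal.IsPrime.mul_mem_pow P this).resolve_right h9

/-- The nontrivial automorphism of `K = k(ω)` over `k`, an involution with `ω ↦ -1 - ω = ω²`, together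
with the description of the fixed field and of the norm in terms of it. -/
theorem exists_conj {k K : Type*} [Field k] [NumberField k] [Field K] [NumberField K] [Algebra k K]
    (ω : K) (hω : ω ^ 2 + ω + 1 = 0)
    (hgen : Algebra.adjoin k ({ω} : Set K) = ⊤)
    (hdeg : Module.finrank k K = 2) :
    ∃ σ : K ≃ₐ[k] K, σ ω = -1 - ω ∧ (∀ x, σ (σ x) = x) ∧
      (∀ x, σ x = x → ∃ t, algebraMap k K t = x) ∧
      ∀ x, algebraMap k K (Algebra.norm k x) = x * σ x := by
  classical
  have : Algebra.IsQuadraticExtension k K := ⟨hdeg⟩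
  have hcard : Nat.card (K ≃ₐ[k] K) = 2 := by rw [IsGalois.card_aut_eq_finrank, hdeg]
  obtain ⟨σ, hσ, huniv⟩ := (Nat.card_eq_two_iff' (1 : K ≃ₐ[k] K)).mp hcard
  have hall : ∀ τ : K ≃ₐ[k] K, τ = 1 ∨ τ = σ := fun τ ↦ by
    by_cases h : τ = 1
    · exact .inl h
    · exact .inr (huniv τ h)
  refine ⟨σ, ?_, ?_, ?_, ?_⟩
  · have h1 : σ ω ≠ ω := fun h ↦ hσ <| by
      have : (σ : K →ₐ[k] K) = AlgHom.id k K :=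
        AlgHom.ext_of_adjoin_eq_top hgen (by simpa using h)
      ext x
      exact DFunLike.congr_fun this x
    have h2 : (σ ω) ^ 2 + σ ω + 1 = 0 := by simpa using congrArg σ hω
    have h3 : (σ ω - ω) * (σ ω + ω + 1) = 0 := by linear_combination h2 - hω
    have h4 := (mul_eq_zero.mp h3).resolve_left (sub_ne_zero.mpr h1)
    linear_combination h4
  · intro x
    have : σ * σ = 1 := (hall (σ * σ)).resolve_right fun h ↦ hσ (mul_eq_left.mp h)
    exact DFunLike.congr_fun this x
  · intro x hx
    refine (IsGalois.mem_range_algebraMap_iff_fixed x).mpr fun f ↦ ?_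
    rcases hall f with rfl | rfl
    · rfl
    · exact hx
  · intro x
    rw [Algebra.norm_eq_prod_automorphisms]
    have : (Finset.univ : Finset (K ≃ₐ[k] K)) = {1, σ} := by
      ext τ
      simpa using hall τ
    rw [this, Finset.prod_pair hσ.symm]
    rfl

/-- As `k` is totally real, the automorphism `ω ↦ -1 - ω` is complex conjugation under every complex
embedding of `K`. -/
theorem embedding_conj {k K : Type*} [Field k] [Field K] [Algebra k K]
    (htr : ∀ φ : k →+* ℂ, ∀ x : k, (φ x).im = 0)
    (ω : K) (hω : ω ^ 2 + ω + 1 = 0)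
    (hgen : Algebra.adjoin k ({ω} : Set K) = ⊤)
    (σ : K ≃ₐ[k] K) (hσ : σ ω = -1 - ω) (φ : K →+* ℂ) (x : K) :
    φ (σ x) = starRingEnd ℂ (φ x) := by
  have hx : x ∈ Algebra.adjoin k ({ω} : Set K) := hgen ▸ trivial
  induction hx using Algebra.adjoin_induction with
  | mem x hx =>
    obtain rfl : x = ω := hx
    rw [hσ, map_sub, map_neg, map_one]
    -- With `z = φ x`, the imaginary part of `z² + z + 1 = 0` is `im z * (2 * re z + 1) = 0`, and
    -- `z² + z + 1` has no real root; so `re z = -1/2` and the conjugate of `z` is `-1 - z`.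
    have hz : (φ x) ^ 2 + φ x + 1 = 0 := by simpa using congrArg φ hω
    generalize φ x = z at *
    have hre := congrArg Complex.re hz
    have him := congrArg Complex.im hz
    simp [pow_two] at hre him
    have h0 : z.im ≠ 0 := fun h0 ↦ by
      rw [h0] at hre
      nlinarith [sq_nonneg (2 * z.re + 1)]
    have h1 : 2 * z.re + 1 = 0 := by
      refine (mul_eq_zero.mp (?_ : z.im * (2 * z.re + 1) = 0)).resolve_left h0
      linear_combination him
    apply Complex.ext <;> simp
    linarith
  | algebraMap a =>
    rw [AlgEquiv.commutes]
    exact (Complex.conj_eq_iff_im.mpr (htr (φ.comp (algebraMap k K)) a)).symm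
  | add x y _ _ hx hy => simp [hx, hy]
  | mul x y _ _ hx hy => simp [hx, hy]

/-- The ramification of `K/k` above `3`: conjugation is trivial on residues. -/
theorem sub_conj_mem {k K : Type*} [Field k] [NumberField k] [Field K] [NumberField K]
    [Algebra k K] (h3 : ¬ ((3 : ℤ) ∣ NumberField.discr k))
    (ω : K) (hω : ω ^ 2 + ω + 1 = 0) (σ : K ≃ₐ[k] K) (hσ : σ ω = -1 - ω)
    (hσσ : ∀ x, σ (σ x) = x) (hfix : ∀ x, σ x = x → ∃ t, algebraMap k K t = x)
    (Q : Ideal (𝓞 K)) [hQ : Q.IsPrime] (h3Q : (3 : 𝓞 K) ∈ Q) (x : 𝓞 K) :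
    x - RingOfIntegers.mapRingEquiv σ.toRingEquiv x ∈ Q := by
  have hs : (1 + 2 * ω) ^ 2 = -3 := by linear_combination 4 * hω
  have hs0 : 1 + 2 * ω ≠ 0 := fun h ↦ by
    rw [h] at hs
    norm_num at hs
  set d : 𝓞 K := x - RingOfIntegers.mapRingEquiv σ.toRingEquiv x with hd
  have hdK : (d : K) = x - σ x := by rw [hd]; rfl
  obtain ⟨b, hb⟩ := hfix ((d : K) / (1 + 2 * ω)) (by
    simp only [hdK, map_div₀, map_sub, map_add, map_mul, map_one, map_ofNat, hσ, hσσ]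
    rw [show (1 : K) + 2 * (-1 - ω) = -(1 + 2 * ω) by ring, div_neg, ← neg_div, neg_sub])
  have hbd : (d : K) = algebraMap k K b * (1 + 2 * ω) := by rw [hb]; field_simp
  have hd2 : algebraMap k K (3 * b ^ 2) = -(d : K) ^ 2 := by
    rw [hbd]
    simp only [map_mul, map_pow, map_ofNat]
    linear_combination algebraMap k K b ^ 2 * hs
  have hcint : IsIntegral ℤ (3 * b ^ 2) := by
    rw [← isIntegral_algebraMap_iff (algebraMap k K).injective, hd2]
    exact ((RingOfIntegers.isIntegral_coe d).pow 2).neg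
  have hyint : IsIntegral ℤ (3 * b) := by
    refine IsIntegral.of_pow (n := 2) (by norm_num) ?_
    rw [show (3 * b) ^ 2 = 3 * (3 * b ^ 2) by ring]
    exact (by simpa using isIntegral_algebraMap (R := ℤ) (A := k) (x := 3) :
      IsIntegral ℤ (3 : k)).mul hcint
  let c : 𝓞 k := ⟨3 * b ^ 2, hcint⟩
  let y : 𝓞 k := ⟨3 * b, hyint⟩
  have hyc : y ^ 2 = 3 * c := by
    apply RingOfIntegers.ext
    change (3 * b) ^ 2 = 3 * (3 * b ^ 2)
    ring
  have hc : c ∈ Q.comap (algebraMap (𝓞 k) (𝓞 K)) :=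
    mem_of_sq_eq_three_mul h3 _ (by rwa [Ideal.mem_comap, map_ofNat]) hyc
  have hcd : algebraMap (𝓞 k) (𝓞 K) c = -d ^ 2 := RingOfIntegers.ext hd2
  rw [Ideal.mem_comap, hcd, neg_mem_iff] at hc
  exact hQ.mem_of_pow_mem 2 hc

/-- Let `k` be a totally real number field in which 3 is unramified (3 does not divide the
discriminant of `k`), and let `K = k(ω)` be the quadratic extension obtained by adjoining a
primitive cube root of unity `ω`.  Then every unit `ε` of `𝓞 K` satisfies `N_{K/k}(ε) = η ^ 2`
for some unit `η` of `𝓞 k`. -/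
theorem units_norm_sq_adjoin_omega
    (k K : Type*) [Field k] [NumberField k] [Field K] [NumberField K] [Algebra k K]
    (htr : ∀ φ : k →+* ℂ, ∀ x : k, (φ x).im = 0)
    (h3 : ¬ ((3 : ℤ) ∣ NumberField.discr k))
    (ω : K) (hω : ω ^ 2 + ω + 1 = 0)
    (hgen : Algebra.adjoin k ({ω} : Set K) = ⊤)
    (hdeg : Module.finrank k K = 2) :
    ∀ ε : (𝓞 K)ˣ, ∃ η : (𝓞 k)ˣ,
      RingOfIntegers.norm k (ε : 𝓞 K) = (η : 𝓞 k) ^ 2 := by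
  intro ε
  obtain ⟨σ, hσ, hσσ, hfix, hnorm⟩ := exists_conj ω hω hgen hdeg
  let s : (𝓞 K)ˣ →* (𝓞 K)ˣ := Units.map (RingOfIntegers.mapRingEquiv σ.toRingEquiv : 𝓞 K →* 𝓞 K)
  have hsK : ∀ u : (𝓞 K)ˣ, ((s u : 𝓞 K) : K) = σ ((u : 𝓞 K) : K) := fun u ↦ rfl
  have hss : ∀ u, s (s u) = u := fun u ↦ Units.ext (RingOfIntegers.ext (hσσ _))
  let ζ : (𝓞 K)ˣ := ε * (s ε)⁻¹
  have hζε : ζ * s ε = ε := by simp [ζ]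
  have hsζ : s ζ = ζ⁻¹ := by simp [ζ, hss]
  have hfin : IsOfFinOrder ζ := by
    obtain ⟨n, hn, h⟩ := Embeddings.pow_eq_one_of_norm_eq_one K ℂ
      (x := ((ζ : 𝓞 K) : K)) (RingOfIntegers.isIntegral_coe _) (fun φ ↦ by
        have h1 : φ ((ζ : 𝓞 K) : K) * φ (σ ((ε : 𝓞 K) : K)) = φ ((ε : 𝓞 K) : K) := by
          rw [← map_mul, ← hsK]
          exact congrArg (fun u : (𝓞 K)ˣ ↦ φ ((u : 𝓞 K) : K)) hζε
        rw [embedding_conj htr ω hω hgen σ hσ] at h1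
        have h2 := congrArg norm h1
        rw [norm_mul, RCLike.norm_conj] at h2
        refine (mul_eq_right₀ ?_).mp h2
        simp)
    exact isOfFinOrder_iff_pow_eq_one.mpr ⟨n, hn, Units.ext (RingOfIntegers.ext (by simpa using h))⟩
  have hodd : Odd (orderOf ζ) := by
    by_contra hev
    obtain ⟨m, hm⟩ := Nat.not_odd_iff_even.mp hev
    have hpos : 0 < orderOf ζ := hfin.orderOf_pos
    have hne : ζ ^ m ≠ 1 := pow_ne_one_of_lt_orderOf (by omega) (by omega)
    have hneg : ((ζ : 𝓞 K)) ^ m = -1 := by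
      have h1 : ((ζ : 𝓞 K) ^ m) ^ 2 = 1 := by
        rw [← pow_mul, mul_two, ← hm, ← Units.val_pow_eq_pow_val, pow_orderOf_eq_one, Units.val_one]
      refine (sq_eq_sq_iff_eq_or_eq_neg.mp (h1.trans (one_pow 2).symm)).resolve_left ?_
      exact fun h ↦ hne (Units.ext (by simpa using h))
    have hnu : ¬ IsUnit (3 : 𝓞 K) := fun hu ↦ by
      have h := hu.map (Algebra.norm ℤ)
      rw [← map_ofNat (algebraMap ℤ (𝓞 K)) 3, Algebra.norm_algebraMap,
        isUnit_pow_iff Module.finrank_pos.ne'] at h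
      exact Int.prime_three.not_isUnit h
    obtain ⟨Q, hQ, h3Q⟩ := exists_max_ideal_of_mem_nonunits hnu
    have hQp := hQ.isPrime
    have hsub := sub_conj_mem h3 ω hω σ hσ hσσ hfix Q h3Q (ε : 𝓞 K)
    have hζ1 : (ζ : 𝓞 K) - 1 ∈ Q := by
      have : (ζ : 𝓞 K) - 1 = (((s ε)⁻¹ : (𝓞 K)ˣ) : 𝓞 K) * (ε - (s ε : 𝓞 K)) := by
        rw [mul_sub, Units.inv_mul, mul_comm]
        simp [ζ]
      rw [this]
      exact Q.mul_mem_left _ hsub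
    have h2 : (ζ : 𝓞 K) ^ m - 1 ∈ Q :=
      Q.mem_of_dvd (by simpa using sub_dvd_pow_sub_pow (ζ : 𝓞 K) 1 m) hζ1
    rw [hneg] at h2
    apply hQp.ne_top
    rw [Ideal.eq_top_iff_one, show (1 : 𝓞 K) = 3 + (-1 - 1) by norm_num]
    exact Q.add_mem h3Q h2
  obtain ⟨m, hm⟩ := hodd
  let ξ : (𝓞 K)ˣ := ζ ^ (m + 1)
  have hξ : ξ * ξ = ζ := by
    rw [← pow_add, show m + 1 + (m + 1) = orderOf ζ + 1 by omega, pow_succ, pow_orderOf_eq_one,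
      one_mul]
  have hsξ : s ξ = ξ⁻¹ := by simp [ξ, hsζ]
  let r : (𝓞 K)ˣ := ε * ξ⁻¹
  have hr : s r = r := by
    simp only [r, map_mul, map_inv, hsξ, inv_inv]
    rw [eq_mul_inv_iff_mul_eq, mul_assoc, hξ, mul_comm, hζε]
  obtain ⟨t, ht⟩ := hfix ((r : 𝓞 K) : K) (by rw [← hsK, hr])
  have htint : IsIntegral ℤ t := by
    rw [← isIntegral_algebraMap_iff (algebraMap k K).injective, ht]
    exact RingOfIntegers.isIntegral_coe _
  have hεr : ε * s ε = r ^ 2 := by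
    have h1 : ε = r * ξ := by simp [r]
    rw [h1, map_mul, hr, hsξ, mul_mul_mul_comm, mul_inv_cancel, mul_one, pow_two]
  obtain ⟨q, hq⟩ : ∃ q : 𝓞 k, (q : k) = t := ⟨⟨t, htint⟩, rfl⟩
  have hN : RingOfIntegers.norm k (ε : 𝓞 K) = q ^ 2 := by
    apply RingOfIntegers.ext
    apply (algebraMap k K).injective
    rw [RingOfIntegers.coe_norm, hnorm, show ((q ^ 2 : 𝓞 k) : k) = t ^ 2 by rw [← hq]; rfl, map_pow, ht,
      ← hsK]
    exact congrArg (fun u : (𝓞 K)ˣ ↦ ((u : 𝓞 K) : K)) hεr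
  have hu : IsUnit q := by
    rw [← isUnit_pow_iff (n := 2) (by norm_num), ← hN]
    exact ε.isUnit.map _
  exact ⟨hu.unit, hN⟩
end

section
/- Let k be a totally real number field in which the rational prime 2 is unramified (equivalently, 2 does not divide the discriminant of k), and let K = k(i) be the totally imaginary quadratic extension of k obtained by adjoining a square root i of −1. Then the only roots of unity in K are ±1 and ±i; that is, every root of unity ζ ∈ K satisfies ζ⁴ = 1. -/
/-!
Write `ζ = a + b i` with `a, b ∈ k`. Since `k` is totally real and `|ζ| = 1` under any complex
embedding, `a² + b² = 1`, hence `ζ⁻¹ = a - b i`, and `u = 2a = ζ + ζ⁻¹`, `v = 2b = -i (ζ - ζ⁻¹)` are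
algebraic integers of `k` with `u² + v² = 4`.

As the discriminant of `k` is odd, the trace form on `𝓞 k / 2` is nondegenerate, so `𝓞 k / 2` is
reduced (`two_dvd_of_two_dvd_sq`). From `(u + v)² = 4 + 2uv` it follows that `u + v = 2w`, and then
from `u² = 2(uw - w² + 1)` that `2 ∣ u` and `2 ∣ v`. So `a` and `b` are themselves algebraic
integers. If both were nonzero, `a² + b² = 1` would force `|σ a| < 1` at every real embedding `σ`,
contradicting that a nonzero algebraic integer has norm of absolute value at least `1`. Hence
`a = 0` or `b = 0`, and `ζ ∈ {±1, ±i}`.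
-/

open NumberField

/-- Nilpotents modulo `2` have even trace, because the trace commutes with Frobenius modulo `2`. -/
lemma two_dvd_trace_of_two_dvd_sq (k : Type*) [Field k] [NumberField k] (x : 𝓞 k)
    (hx : 2 ∣ x ^ 2) : (2 : ℤ) ∣ Algebra.trace ℤ (𝓞 k) x := by
  classical
  obtain ⟨y, hy⟩ := hx
  have h := ZMod.trace_pow_card (p := 2)
    ((Algebra.leftMulMatrix (RingOfIntegers.basis k) x).map (Int.castRingHom (ZMod 2)))
  rw [← Matrix.map_pow, ← map_pow, hy, ← AddMonoidHom.map_trace, ← AddMonoidHom.map_trace,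
    ← Algebra.trace_eq_matrix_trace, ← Algebra.trace_eq_matrix_trace] at h
  have h2 : Algebra.trace ℤ (𝓞 k) (2 * y) = 2 * Algebra.trace ℤ (𝓞 k) y := by
    rw [two_mul, map_add, two_mul]
  rw [h2] at h
  have h3 : ((Algebra.trace ℤ (𝓞 k) x : ℤ) : ZMod 2) ^ 2 = 0 := by
    have h20 : (2 : ZMod 2) = 0 := by decide
    simpa [h20] using h.symm
  exact (ZMod.intCast_zmod_eq_zero_iff_dvd _ 2).1 (pow_eq_zero_iff two_ne_zero |>.1 h3)

/-- If the discriminant of `k` is odd, then `𝓞 k / 2` is reduced. -/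
lemma two_dvd_of_two_dvd_sq (k : Type*) [Field k] [NumberField k]
    (h2 : ¬ ((2 : ℤ) ∣ NumberField.discr k)) (x : 𝓞 k) (hx : 2 ∣ x ^ 2) : 2 ∣ x := by
  classical
  let b := RingOfIntegers.basis k
  let M := (Algebra.traceMatrix ℤ b).map (Int.castRingHom (ZMod 2))
  have hdet : M.det ≠ 0 := by
    intro h
    apply h2
    rw [← discr_eq_discr k b, Algebra.discr_def]
    simp only [M, ← RingHom.mapMatrix_apply, ← RingHom.map_det] at h
    exact (ZMod.intCast_zmod_eq_zero_iff_dvd _ 2).1 h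
  have hv : M.mulVec (fun j => ((b.repr x j : ℤ) : ZMod 2)) = 0 := by
    funext j
    have h1 : (2 : ℤ) ∣ Algebra.trace ℤ (𝓞 k) (b j * x) := by
      apply two_dvd_trace_of_two_dvd_sq
      rw [mul_pow]
      exact hx.mul_left _
    have h3 : Algebra.trace ℤ (𝓞 k) (b j * x)
        = ∑ l, Algebra.traceMatrix ℤ b j l * b.repr x l := by
      conv_lhs => rw [← b.sum_repr x]
      simp only [Finset.mul_sum, map_sum, mul_smul_comm, map_smul, smul_eq_mul,
        Algebra.traceMatrix_apply, Algebra.traceForm_apply]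
      exact Finset.sum_congr rfl fun _ _ => mul_comm _ _
    rw [h3] at h1
    have h4 := (ZMod.intCast_zmod_eq_zero_iff_dvd _ 2).2 h1
    simpa [Matrix.mulVec, dotProduct, M] using h4
  have h0 := Matrix.eq_zero_of_mulVec_eq_zero hdet hv
  have h5 : ∀ j, ∃ c : ℤ, b.repr x j = 2 * c := fun j =>
    (ZMod.intCast_zmod_eq_zero_iff_dvd _ 2).1 (congrFun h0 j)
  choose c hc using h5
  refine ⟨∑ j, c j • b j, ?_⟩
  conv_lhs => rw [← b.sum_repr x]
  rw [Finset.mul_sum]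
  refine Finset.sum_congr rfl fun j _ => ?_
  rw [hc j, zsmul_eq_mul, zsmul_eq_mul]
  push_cast
  ring

/-- In a totally real field, the integral points of the unit circle lie on the axes. -/
lemma eq_zero_or_eq_zero_of_sq_add_sq_eq_one (k : Type*) [Field k] [NumberField k]
    (htr : ∀ φ : k →+* ℂ, ∀ x : k, (φ x).im = 0) (a b : 𝓞 k)
    (hab : a ^ 2 + b ^ 2 = 1) : a = 0 ∨ b = 0 := by
  by_contra! h
  obtain ⟨ha, hb⟩ := h
  have key : ∀ z : InfinitePlace k, z a < 1 := by
    intro z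
    rw [← InfinitePlace.norm_embedding_eq]
    set φ := z.embedding
    have h1 : φ a ^ 2 + φ b ^ 2 = 1 := by
      have := congrArg (fun t : 𝓞 k => φ (t : k)) hab
      simpa using this
    have hae : φ a = ((φ a).re : ℂ) := Complex.ext rfl (by simp [htr])
    have hbe : φ b = ((φ b).re : ℂ) := Complex.ext rfl (by simp [htr])
    have hb0 : (φ b).re ≠ 0 := by
      intro h0
      rw [h0, Complex.ofReal_zero, map_eq_zero] at hbe
      exact hb (RingOfIntegers.ext hbe)
    rw [hae, hbe] at h1
    have h2 : (φ a).re ^ 2 + (φ b).re ^ 2 = 1 := by exact_mod_cast h1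
    rw [hae, Complex.norm_real, Real.norm_eq_abs, ← sq_lt_one_iff_abs_lt_one]
    have := sq_pos_of_ne_zero hb0
    linarith
  obtain ⟨w⟩ := (inferInstance : Nonempty (InfinitePlace k))
  exact absurd (InfinitePlace.one_le_of_lt_one ha (fun z _ => key z) (w := w)) (not_le.2 (key w))

/-- Let `k` be a totally real number field in which 2 is unramified (2 does not divide the
discriminant of `k`), and let `K = k(i)` be the quadratic extension obtained by adjoining a
square root `i` of `-1`.  Then the only roots of unity in `K` are `±1` and `±i`: every root of
unity `ζ ∈ K` satisfies `ζ ^ 4 = 1`. -/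
theorem rootsOfUnity_adjoin_i
    (k K : Type*) [Field k] [NumberField k] [Field K] [NumberField K] [Algebra k K]
    (htr : ∀ φ : k →+* ℂ, ∀ x : k, (φ x).im = 0)
    (h2 : ¬ ((2 : ℤ) ∣ NumberField.discr k))
    (i : K) (hi : i ^ 2 = -1)
    (hgen : Algebra.adjoin k ({i} : Set K) = ⊤)
    (hdeg : Module.finrank k K = 2) :
    ∀ ζ : K, (∃ n : ℕ, 0 < n ∧ ζ ^ n = 1) → ζ ^ 4 = 1 := by
  rintro ζ ⟨n, hn, hζ⟩
  have hrep : ∀ x : K, ∃ a b : k, x = algebraMap k K a + algebraMap k K b * i := by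
    intro x
    have hx : x ∈ Algebra.adjoin k ({i} : Set K) := hgen ▸ Algebra.mem_top
    induction hx using Algebra.adjoin_induction with
    | mem x hx => exact ⟨0, 1, by simpa using hx⟩
    | algebraMap r => exact ⟨r, 0, by simp⟩
    | add x y _ _ hx hy =>
      obtain ⟨a, b, rfl⟩ := hx
      obtain ⟨c, d, rfl⟩ := hy
      exact ⟨a + c, b + d, by simp only [map_add]; ring⟩
    | mul x y _ _ hx hy =>
      obtain ⟨a, b, rfl⟩ := hx
      obtain ⟨c, d, rfl⟩ := hy
      refine ⟨a * c - b * d, a * d + b * c, ?_⟩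
      simp only [map_add, map_sub, map_mul]
      linear_combination (algebraMap k K b * algebraMap k K d) * hi
  obtain ⟨a, b, hab⟩ := hrep ζ
  have hcirc : a ^ 2 + b ^ 2 = 1 := by
    obtain ⟨φ⟩ := (inferInstance : Nonempty (K →+* ℂ))
    let ψ : k →+* ℂ := φ.comp (algebraMap k K)
    have hnorm : ‖φ ζ‖ = 1 :=
      Complex.norm_eq_one_of_pow_eq_one (n := n) (by rw [← map_pow, hζ, map_one]) hn.ne'
    have hae : ψ a = ((ψ a).re : ℂ) := Complex.ext rfl (by simp [htr])
    have hbe : ψ b = ((ψ b).re : ℂ) := Complex.ext rfl (by simp [htr])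
    have hI : φ i = Complex.I ∨ φ i = -Complex.I := by
      rw [← sq_eq_sq_iff_eq_or_eq_neg, ← map_pow, hi, Complex.I_sq, map_neg, map_one]
    have hφ : φ ζ = ((ψ a).re : ℂ) + ((ψ b).re : ℂ) * φ i := by
      rw [← hae, ← hbe, hab, map_add, map_mul]; rfl
    have hsq : (ψ a).re ^ 2 + (ψ b).re ^ 2 = 1 := by
      have h1 : Complex.normSq (φ ζ) = 1 := by rw [Complex.normSq_eq_norm_sq, hnorm, one_pow]
      rw [hφ, Complex.normSq_apply] at h1
      rcases hI with h | h <;> rw [h] at h1 <;> simp at h1 <;> nlinarith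
    apply ψ.injective
    rw [map_add, map_pow, map_pow, map_one, hae, hbe]
    exact_mod_cast hsq
  have hcircK : algebraMap k K a ^ 2 + algebraMap k K b ^ 2 = 1 := by
    rw [← map_pow, ← map_pow, ← map_add, hcirc, map_one]
  -- The inverse of `ζ` is its conjugate, and both are algebraic integers.
  have hinv : (algebraMap k K a - algebraMap k K b * i) * ζ = 1 := by
    rw [hab]
    linear_combination hcircK - (algebraMap k K b) ^ 2 * hi
  have hinvn : (algebraMap k K a - algebraMap k K b * i) ^ n = 1 := by
    have := congrArg (· ^ n) hinv
    simpa [mul_pow, hζ] using this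
  have hint : ∀ x : K, x ^ n = 1 → IsIntegral ℤ x := fun x hx =>
    IsIntegral.of_pow hn (hx ▸ isIntegral_one)
  have hiint : IsIntegral ℤ i := IsIntegral.of_pow two_pos (hi ▸ isIntegral_one.neg)
  have hinj : Function.Injective (algebraMap k K) := (algebraMap k K).injective
  have hu : IsIntegral ℤ (2 * a) := by
    refine (isIntegral_algebraMap_iff hinj).1 ?_
    have h := (hint _ hζ).add (hint _ hinvn)
    have he : algebraMap k K (2 * a) = ζ + (algebraMap k K a - algebraMap k K b * i) := by
      rw [hab, map_mul, map_ofNat]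
      ring
    rw [he]
    exact h
  have hv : IsIntegral ℤ (2 * b) := by
    refine (isIntegral_algebraMap_iff hinj).1 ?_
    have h := hiint.mul ((hint _ hinvn).sub (hint _ hζ))
    have he : algebraMap k K (2 * b)
        = i * (algebraMap k K a - algebraMap k K b * i - ζ) := by
      rw [hab, map_mul, map_ofNat]
      linear_combination (2 * algebraMap k K b) * hi
    rw [he]
    exact h
  obtain ⟨u, hu'⟩ : ∃ u : 𝓞 k, (u : k) = 2 * a := ⟨⟨2 * a, hu⟩, rfl⟩
  obtain ⟨v, hv'⟩ : ∃ v : 𝓞 k, (v : k) = 2 * b := ⟨⟨2 * b, hv⟩, rfl⟩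
  have huv : u ^ 2 + v ^ 2 = 4 := by
    apply RingOfIntegers.ext
    simp only [map_add, map_pow, hu', hv', map_ofNat]
    linear_combination 4 * hcirc
  obtain ⟨w, hw⟩ : 2 ∣ u + v :=
    two_dvd_of_two_dvd_sq k h2 _ ⟨2 + u * v, by linear_combination huv⟩
  have huw : u ^ 2 = 2 * (u * w - w ^ 2 + 1) := by
    -- Substituting `v = 2w - u` into `u² + v² = 4` gives twice this identity.
    have h20 : (2 : 𝓞 k) ≠ 0 := two_ne_zero
    apply mul_left_cancel₀ h20
    have hv2 : v = 2 * w - u := by linear_combination hw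
    rw [hv2] at huv
    linear_combination huv
  obtain ⟨a', ha'⟩ : 2 ∣ u := two_dvd_of_two_dvd_sq k h2 _ ⟨_, huw⟩
  have hb' : v = 2 * (w - a') := by linear_combination hw - ha'
  have hak : algebraMap (𝓞 k) k a' = a := by
    apply mul_left_cancel₀ (two_ne_zero (α := k))
    have h := congrArg (algebraMap (𝓞 k) k) ha'
    rw [map_mul, map_ofNat] at h
    exact h.symm.trans hu'
  have hbk : algebraMap (𝓞 k) k (w - a') = b := by
    apply mul_left_cancel₀ (two_ne_zero (α := k))
    have h := congrArg (algebraMap (𝓞 k) k) hb'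
    rw [map_mul, map_ofNat] at h
    exact h.symm.trans hv'
  have hone : a' ^ 2 + (w - a') ^ 2 = 1 := by
    apply RingOfIntegers.ext
    change algebraMap (𝓞 k) k (a' ^ 2 + (w - a') ^ 2) = algebraMap (𝓞 k) k 1
    rw [map_add, map_pow, map_pow, hak, hbk, hcirc, map_one]
  rcases eq_zero_or_eq_zero_of_sq_add_sq_eq_one k htr _ _ hone with h | h
  · have ha0 : a = 0 := by rw [← hak, h, map_zero]
    rw [ha0, map_zero] at hcircK hab
    have hb2 : algebraMap k K b ^ 2 = 1 := by linear_combination hcircK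
    have hi4 : i ^ 4 = 1 := by linear_combination (i ^ 2 - 1) * hi
    rw [hab, zero_add, mul_pow, hi4, mul_one]
    linear_combination (algebraMap k K b ^ 2 + 1) * hb2
  · have hb0 : b = 0 := by rw [← hbk, h, map_zero]
    rw [hb0, map_zero] at hcircK hab
    have ha2 : algebraMap k K a ^ 2 = 1 := by linear_combination hcircK
    rw [hab, zero_mul, add_zero]
    linear_combination (algebraMap k K a ^ 2 + 1) * ha2
end

section
/- Let k be a number field with ring of integers R, let a, b ∈ R, and let A = (a,b / k) be the quaternion algebra over k with basis 1, i, j, ij satisfying i² = a, j² = b, ij = −ji. Let x₀, x₁, x₂ ∈ R satisfy x₀² − a·x₁² − b·x₂² ∈ 4R, and set β = (1/2)(x₀ + x₁·i + x₂·j) ∈ A. Then the R-submodule O of A spanned by {1, i, β, i·β} is closed under multiplication (hence is a subring of A containing 1), and every element of O is integral over R (its reduced trace and reduced norm lie in R). -/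
open NumberField Quaternion

/-! The order is `S + Sβ` with `S = R + Ri`. Writing `n = nrd β = (x₀² - a x₁² - b x₂²)/4 ∈ R`,
one has `i² = a`, `β² = x₀ β - n` and `β i = (a x₁ + x₀ i) - i β`. These relations have coefficients in `R`,
so products of elements `p + q i + r β + s iβ` are again of this form. The reduced trace and norm
of such an element are `2p + r x₀ + s a x₁` and
`p² - a q² + n (r² - a s²) + (p r - a q s) x₀ + (p s - q r) a x₁`, both in `R`. -/

/-- Let `k` be a number field with ring of integers `R = 𝓞 k`, let `a, b ∈ R`, and let
`A = (a,b / k)` be the quaternion algebra with `i² = a`, `j² = b`, `ij = -ji`.  If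
`x₀, x₁, x₂ ∈ R` satisfy `x₀² − a x₁² − b x₂² ∈ 4R` and `β = (1/2)(x₀ + x₁ i + x₂ j)`, then
the `R`-submodule `O` of `A` spanned by `{1, i, β, i β}` is closed under multiplication and
every element of `O` is integral over `R`: its reduced trace `2 x.re` and reduced norm
`(x * star x).re` are integral over `ℤ`, i.e. lie in `R`. -/
theorem quaternion_span_mul_closed_and_integral
    (k : Type*) [Field k] [NumberField k] (a b : 𝓞 k) (x₀ x₁ x₂ : 𝓞 k)
    (h : x₀ ^ 2 - a * x₁ ^ 2 - b * x₂ ^ 2 ∈ Ideal.span ({4} : Set (𝓞 k))) :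
    let i : ℍ[k, (a : k), (b : k)] := ⟨0, 1, 0, 0⟩
    let j : ℍ[k, (a : k), (b : k)] := ⟨0, 0, 1, 0⟩
    let β : ℍ[k, (a : k), (b : k)] :=
      (1 / 2 : k) • (((x₀ : k) : ℍ[k, (a : k), (b : k)]) + (x₁ : k) • i + (x₂ : k) • j)
    let O : Submodule (𝓞 k) ℍ[k, (a : k), (b : k)] :=
      Submodule.span (𝓞 k) ({1, i, β, i * β} : Set ℍ[k, (a : k), (b : k)])
    (∀ x ∈ O, ∀ y ∈ O, x * y ∈ O) ∧
    (∀ x ∈ O, IsIntegral ℤ (2 * x.re) ∧ IsIntegral ℤ ((x * star x).re)) := by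
  intro i j β O
  obtain ⟨n, hn⟩ := Ideal.mem_span_singleton'.mp h
  have hn' : (n : k) * 4 = (x₀ : k) ^ 2 - a * x₁ ^ 2 - b * x₂ ^ 2 := by
    have h4 : algebraMap (𝓞 k) k 4 = 4 := map_ofNat _ 4
    simpa only [map_mul, map_sub, map_pow, h4] using congrArg (algebraMap (𝓞 k) k) hn
  have hn2 : (n : k) = ((x₀ : k) ^ 2 - a * x₁ ^ 2 - b * x₂ ^ 2) / 4 := by
    rw [← hn']; ring
  have hmem : ∀ x, x ∈ O ↔ ∃ p q r s : 𝓞 k, x =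
      (⟨p + r * x₀ / 2 + s * a * x₁ / 2, q + r * x₁ / 2 + s * x₀ / 2,
        r * x₂ / 2, s * x₂ / 2⟩ : ℍ[k, (a : k), (b : k)]) := by
    intro x
    have hcomb : ∀ p q r s : 𝓞 k,
        p • (1 : ℍ[k, (a : k), (b : k)]) + (q • i + (r • β + s • (i * β))) =
        (⟨p + r * x₀ / 2 + s * a * x₁ / 2, q + r * x₁ / 2 + s * x₀ / 2,
        r * x₂ / 2, s * x₂ / 2⟩ : ℍ[k, (a : k), (b : k)]) := by
      intro p q r s
      ext <;>
        simp [i, j, β, Algebra.smul_def, NumberField.RingOfIntegers.coe_eq_algebraMap] <;> ring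
    simp only [O, Submodule.mem_span_insert, Submodule.mem_span_singleton]
    constructor
    · rintro ⟨p, _, ⟨q, _, ⟨r, _, ⟨s, rfl⟩, rfl⟩, rfl⟩, rfl⟩
      exact ⟨p, q, r, s, hcomb p q r s⟩
    · rintro ⟨p, q, r, s, rfl⟩
      exact ⟨p, _, ⟨q, _, ⟨r, _, ⟨s, rfl⟩, rfl⟩, rfl⟩, (hcomb p q r s).symm⟩
  constructor
  · intro x hx y hy
    obtain ⟨p, q, r, s, rfl⟩ := (hmem x).mp hx
    obtain ⟨p', q', r', s', rfl⟩ := (hmem y).mp hy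
    -- With `U = p + q i`, `V = r + s i`, `w = a x₁ + x₀ i`, the product is
    -- `(U U' + q' V w - n V V̄') + (U V' + V Ū' + x₀ V V̄' + s' V w) β`.
    refine (hmem _).mpr ⟨
      p * p' + a * q * q' + q' * (r * a * x₁ + s * a * x₀) - n * (r * r' - a * s * s'),
      p * q' + q * p' + q' * (r * x₀ + s * a * x₁) - n * (s * r' - r * s'),
      p * r' + a * q * s' + (r * p' - a * s * q') + x₀ * (r * r' - a * s * s')
        + s' * (r * a * x₁ + s * a * x₀),
      p * s' + q * r' + (s * p' - r * q') + x₀ * (s * r' - r * s')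
        + s' * (r * x₀ + s * a * x₁), ?_⟩
    ext <;> simp [hn2] <;> ring
  · intro x hx
    obtain ⟨p, q, r, s, rfl⟩ := (hmem x).mp hx
    constructor
    · convert (2 * p + r * x₀ + s * a * x₁ : 𝓞 k).isIntegral_coe using 1
      have h2 : algebraMap (𝓞 k) k 2 = 2 := map_ofNat _ 2
      simp [h2]
      ring
    · convert (p ^ 2 - a * q ^ 2 + n * (r ^ 2 - a * s ^ 2) + (p * r - a * q * s) * x₀
        + (p * s - q * r) * a * x₁ : 𝓞 k).isIntegral_coe using 1
      simp [hn2]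
      ring
end

section
/- Let k be a number field with ring of integers R, let a, b ∈ R, and let A = (a,b / k) be the quaternion algebra over k with basis 1, i, j, ij satisfying i² = a, j² = b, ij = −ji. Let x₀, x₁, x₂ ∈ R satisfy x₀² − a·x₁² − b·x₂² ∈ 4R and suppose in addition that x₂ is a unit of R. Set β = (1/2)(x₀ + x₁·i + x₂·j) ∈ A and let O be the R-submodule of A spanned by {1, i, β, i·β}. Then j ∈ O, so O contains the R-span of {1, i, j, ij}, and the determinant of the 4×4 matrix whose (r,s)-entry is the reduced trace trd(e_r · e_s), for (e₁, e₂, e₃, e₄) = (1, i, β, i·β), generates the principal ideal a²·b²·R of R (it equals a²b²x₂⁴ up to sign, and x₂⁴ is a unit). -/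
open NumberField Quaternion

/-!
Since `2β = x₀ + x₁ i + x₂ j` and `x₂` is invertible in `R`, one can solve for `j` and `ij`:
`j = x₂⁻¹ (2β - x₀ - x₁ i)` and `ij = x₂⁻¹ (2 iβ - x₀ i - x₁ a)`, so both lie in the span.
The trace form in the basis `1, i, j, ij` is `diag(2, 2a, 2b, -2ab)`, of determinant `-16 a² b²`,
and the change of basis to `1, i, β, iβ` has determinant `(x₂ / 2)²`; the discriminant is therefore
`-a² b² x₂⁴`, an associate of `a² b²`.
-/

/-- Let `k` be a number field with ring of integers `R = 𝓞 k`, let `a, b ∈ R`, and let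
`A = (a,b / k)` be the quaternion algebra with `i² = a`, `j² = b`, `ij = -ji`.  Let
`x₀, x₁, x₂ ∈ R` satisfy `x₀² − a x₁² − b x₂² ∈ 4R` with `x₂` a unit of `R`, and set
`β = (1/2)(x₀ + x₁ i + x₂ j)` and `O = R⟨1, i, β, i β⟩`.  Then `j ∈ O`, so `O` contains the
`R`-span of `{1, i, j, ij}`, and the determinant of the matrix of reduced traces
`trd (e_r * e_s)` for the basis `(1, i, β, i β)` generates the ideal `a² b² R`. -/
theorem quaternion_span_discriminant
    (k : Type*) [Field k] [NumberField k] (a b : 𝓞 k) (x₀ x₁ x₂ : 𝓞 k)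
    (h : x₀ ^ 2 - a * x₁ ^ 2 - b * x₂ ^ 2 ∈ Ideal.span ({4} : Set (𝓞 k)))
    (hx₂ : IsUnit x₂) :
    let i : ℍ[k, (a : k), (b : k)] := ⟨0, 1, 0, 0⟩
    let j : ℍ[k, (a : k), (b : k)] := ⟨0, 0, 1, 0⟩
    let β : ℍ[k, (a : k), (b : k)] :=
      (1 / 2 : k) • (((x₀ : k) : ℍ[k, (a : k), (b : k)]) + (x₁ : k) • i + (x₂ : k) • j)
    let O : Submodule (𝓞 k) ℍ[k, (a : k), (b : k)] :=
      Submodule.span (𝓞 k) ({1, i, β, i * β} : Set ℍ[k, (a : k), (b : k)])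
    let e : Fin 4 → ℍ[k, (a : k), (b : k)] := ![1, i, β, i * β]
    let M : Matrix (Fin 4) (Fin 4) k := fun r s => 2 * (e r * e s).re
    j ∈ O ∧
    Submodule.span (𝓞 k) ({1, i, j, i * j} : Set ℍ[k, (a : k), (b : k)]) ≤ O ∧
    ∃ d : 𝓞 k, (d : k) = M.det ∧
      Ideal.span ({d} : Set (𝓞 k)) = Ideal.span ({a ^ 2 * b ^ 2} : Set (𝓞 k)) := by
  intro i j β O e M
  obtain ⟨u, hu⟩ := hx₂.exists_left_inv
  have huk : (u : k) * (x₂ : k) = 1 := by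
    exact_mod_cast congrArg (algebraMap (𝓞 k) k) hu
  have smul_eq : ∀ (r : 𝓞 k) (q : ℍ[k, (a : k), (b : k)]), r • q = (r : k) • q := fun r q =>
    (algebraMap_smul k r q).symm
  have h1 : (1 : ℍ[k, (a : k), (b : k)]) ∈ O := Submodule.subset_span (by simp)
  have hi : i ∈ O := Submodule.subset_span (by simp)
  have hβ : β ∈ O := Submodule.subset_span (by simp)
  have hiβ : i * β ∈ O := Submodule.subset_span (by simp)
  have two_coe : ((2 : 𝓞 k) : k) = 2 := map_ofNat (algebraMap (𝓞 k) k) 2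
  have hj_eq : j = u • ((2 : 𝓞 k) • β - x₀ • (1 : ℍ[k, (a : k), (b : k)]) - x₁ • i) := by
    simp only [smul_eq, two_coe]
    ext <;> simp [i, j, β, huk, -algebraMap_smul]
  have hij_eq : i * j = u • ((2 : 𝓞 k) • (i * β) - x₀ • i
      - (x₁ * a) • (1 : ℍ[k, (a : k), (b : k)])) := by
    simp only [smul_eq, two_coe]
    ext <;> simp [i, j, β, huk, -algebraMap_smul]
    exact Or.inr (by ring)
  have hj : j ∈ O := by
    rw [hj_eq]
    exact O.smul_mem _ (O.sub_mem (O.sub_mem (O.smul_mem _ hβ) (O.smul_mem _ h1))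
      (O.smul_mem _ hi))
  have hij : i * j ∈ O := by
    rw [hij_eq]
    exact O.smul_mem _ (O.sub_mem (O.sub_mem (O.smul_mem _ hiβ) (O.smul_mem _ hi))
      (O.smul_mem _ h1))
  refine ⟨hj, ?_, -(a ^ 2 * b ^ 2 * x₂ ^ 4), ?_, ?_⟩
  · rw [Submodule.span_le]
    rintro q (rfl | rfl | rfl | rfl)
    exacts [h1, hi, hj, hij]
  · have hM : M = !![2, 0, (x₀ : k), a * x₁;
        0, 2 * a, a * x₁, a * x₀;
        (x₀ : k), a * x₁, (x₀ ^ 2 + a * x₁ ^ 2 + b * x₂ ^ 2) / 2, a * x₀ * x₁;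
        a * x₁, a * x₀, a * x₀ * x₁, a * (x₀ ^ 2 + a * x₁ ^ 2 - b * x₂ ^ 2) / 2] := by
      ext r s
      fin_cases r <;> fin_cases s <;> simp [M, e, i, j, β, -algebraMap_smul] <;> field_simp <;> ring
    rw [hM]
    simp [Matrix.det_succ_row_zero, Fin.sum_univ_succ, Fin.succAbove]
    ring
  · rw [Ideal.span_singleton_neg, Ideal.span_singleton_mul_right_unit (hx₂.pow 4)]
end

section
/- Let k be a number field with ring of integers R, and let a, b ∈ R be such that (i) the ideal generated by a and b is all of R, and (ii) there exist ã, b̃ ∈ R with ã² ≡ a (mod 4R) and b̃² ≡ b (mod 4R). Let A = (a,b / k) be the quaternion algebra over k with basis 1, i, j, ij satisfying i² = a, j² = b, ij = −ji, and let O' be the R-span of {1, i, j, ij}. Then there exist x₀, x₁ ∈ R such that, setting β = (1/2)(x₀ + x₁·i + j) ∈ (1/2)O', the R-submodule O of A spanned by {1, i, β, i·β} is a subring of A containing O', every element of O is integral over R, and the determinant of the 4×4 matrix (trd(e_r·e_s)) for the basis (e₁, e₂, e₃, e₄) = (1, i, β, i·β) generates the ideal a²·b²·R. -/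
/-!
The witnesses are `x₀ = b'`, where `b'² ≡ b (mod 4R)`, and `x₁ = 0`, so that `β = (b' + j) / 2`
has reduced trace `b'` and reduced norm `n = (b'² - b) / 4`, both in `R`. The relations
`β² = b' β - n` and `β i = b' i - i β` show that the span of `1, i, β, iβ` is closed under
multiplication, and it contains `j = 2β - b'`. With `x = p + q i + r β + s iβ`, one finds
`trd x = 2p + b' r` and `nrd x = (p² + b' p r + n r²) - a (q² + b' q s + n s²)`, which lie in `R`.
The trace form of `1, i, j, ij` has determinant `-16 a² b²`, and the change of basis to
`1, i, β, iβ` has determinant `1/4`, so the determinant in question is `-a² b²`.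

All computations are done in the coordinates provided by `mem_span_half_order`.
-/

open NumberField Quaternion

/-- Coordinates of the elements of the `R`-span of `1, i, β, iβ`, where `β = (c + j) / 2`:
the quadruple `(p, q, r, s)` stands for `p + q i + r β + s iβ`. -/
lemma mem_span_half_order {k : Type*} [Field k] [NumberField k] (a b c : 𝓞 k)
    (x : ℍ[k, (a : k), (b : k)]) :
    x ∈ Submodule.span (𝓞 k) ({1, ⟨0, 1, 0, 0⟩, ⟨(c : k) / 2, 0, 1 / 2, 0⟩,
        ⟨0, (c : k) / 2, 0, 1 / 2⟩} : Set ℍ[k, (a : k), (b : k)]) ↔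
      ∃ p q r s : 𝓞 k, x = ⟨p + r * c / 2, q + s * c / 2, r / 2, s / 2⟩ := by
  simp only [Submodule.mem_span_insert, Submodule.mem_span_singleton]
  constructor
  · rintro ⟨p, _, ⟨q, _, ⟨r, _, ⟨s, rfl⟩, rfl⟩, rfl⟩, rfl⟩
    refine ⟨p, q, r, s, ?_⟩
    ext <;> simp [Algebra.smul_def] <;> ring
  · rintro ⟨p, q, r, s, rfl⟩
    refine ⟨p, _, ⟨q, _, ⟨r, _, ⟨s, rfl⟩, rfl⟩, rfl⟩, ?_⟩
    ext <;> simp [Algebra.smul_def] <;> ring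

/-- Let `k` be a number field with ring of integers `R = 𝓞 k`, and let `a, b ∈ R` be coprime
and congruent to squares mod `4R`.  Let `A = (a,b / k)` be the quaternion algebra with
`i² = a`, `j² = b`, `ij = -ji`, and let `O'` be the `R`-span of `{1, i, j, ij}`.  Then there
are `x₀, x₁ ∈ R` such that, with `β = (1/2)(x₀ + x₁ i + j)`, the `R`-submodule `O` spanned by
`{1, i, β, i β}` is a subring of `A` containing `O'`, every element of `O` is integral over
`R`, and the determinant of the matrix of reduced traces of the basis `(1, i, β, i β)`
generates the ideal `a² b² R`. -/
theorem exists_maximal_order_nice_symbol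
    (k : Type*) [Field k] [NumberField k] (a b : 𝓞 k)
    (hab : Ideal.span ({a, b} : Set (𝓞 k)) = ⊤)
    (ha : ∃ a' : 𝓞 k, a' ^ 2 - a ∈ Ideal.span ({4} : Set (𝓞 k)))
    (hb : ∃ b' : 𝓞 k, b' ^ 2 - b ∈ Ideal.span ({4} : Set (𝓞 k))) :
    ∃ x₀ x₁ : 𝓞 k,
      let i : ℍ[k, (a : k), (b : k)] := ⟨0, 1, 0, 0⟩
      let j : ℍ[k, (a : k), (b : k)] := ⟨0, 0, 1, 0⟩
      let β : ℍ[k, (a : k), (b : k)] :=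
        (1 / 2 : k) • (((x₀ : k) : ℍ[k, (a : k), (b : k)]) + (x₁ : k) • i + j)
      let O : Submodule (𝓞 k) ℍ[k, (a : k), (b : k)] :=
        Submodule.span (𝓞 k) ({1, i, β, i * β} : Set ℍ[k, (a : k), (b : k)])
      let O' : Submodule (𝓞 k) ℍ[k, (a : k), (b : k)] :=
        Submodule.span (𝓞 k) ({1, i, j, i * j} : Set ℍ[k, (a : k), (b : k)])
      let e : Fin 4 → ℍ[k, (a : k), (b : k)] := ![1, i, β, i * β]
      let M : Matrix (Fin 4) (Fin 4) k := fun r s => 2 * (e r * e s).re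
      (1 : ℍ[k, (a : k), (b : k)]) ∈ O ∧
      (∀ x ∈ O, ∀ y ∈ O, x * y ∈ O) ∧
      O' ≤ O ∧
      (∀ x ∈ O, IsIntegral ℤ (2 * x.re) ∧ IsIntegral ℤ ((x * star x).re)) ∧
      ∃ d : 𝓞 k, (d : k) = M.det ∧
        Ideal.span ({d} : Set (𝓞 k)) = Ideal.span ({a ^ 2 * b ^ 2} : Set (𝓞 k)) := by
  obtain ⟨c, hc⟩ := hb
  obtain ⟨n, hn⟩ := Ideal.mem_span_singleton'.mp hc
  -- `n = (c² - b) / 4` is the reduced norm of `β`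
  have hn' : (b : k) = (c : k) ^ 2 - 4 * (n : k) := by
    have h := congrArg (algebraMap (𝓞 k) k) hn
    simp only [map_mul, map_sub, map_pow, map_ofNat] at h
    linear_combination h
  have h2 : ((2 : 𝓞 k) : k) = 2 := map_ofNat (algebraMap (𝓞 k) k) 2
  refine ⟨c, 0, ?_⟩
  intro i j β O O' e M
  have hβ : β = ⟨(c : k) / 2, 0, 1 / 2, 0⟩ := by
    ext <;> simp [β, i, j] <;> ring
  have hiβ : i * β = ⟨0, (c : k) / 2, 0, 1 / 2⟩ := by
    rw [hβ]
    ext <;> simp [i]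
  have hO : ∀ x, x ∈ O ↔
      ∃ p q r s : 𝓞 k, x = ⟨p + r * c / 2, q + s * c / 2, r / 2, s / 2⟩ := by
    intro x
    rw [← mem_span_half_order]
    simp only [O, hiβ]
    rw [hβ]
  refine ⟨Submodule.subset_span (by simp), ?_, ?_, ?_, ?_⟩
  · intro x hx y hy
    obtain ⟨p, q, r, s, rfl⟩ := (hO x).mp hx
    obtain ⟨p', q', r', s', rfl⟩ := (hO y).mp hy
    -- structure constants, from `β² = c β - n` and `β i = c i - i β`
    refine (hO _).mpr ⟨p * p' + a * q * q' - n * r * r' + a * c * s * q' + a * n * s * s',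
      p * q' + q * p' + c * r * q' + n * r * s' - n * s * r',
      p * r' + r * p' + a * q * s' + c * r * r' - a * s * q',
      p * s' + s * p' + q * r' - r * q' + c * s * r', ?_⟩
    ext <;> simp [hn'] <;> ring
  · refine Submodule.span_le.mpr ?_
    rintro x (rfl | rfl | rfl | rfl)
    · exact (hO _).mpr ⟨1, 0, 0, 0, by ext <;> simp⟩
    · exact (hO _).mpr ⟨0, 1, 0, 0, by ext <;> simp [i]⟩
    · exact (hO _).mpr ⟨-c, 0, 2, 0, by ext <;> simp [j, h2]⟩
    · exact (hO _).mpr ⟨0, -c, 0, 2, by ext <;> simp [i, j, h2]⟩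
  · intro x hx
    obtain ⟨p, q, r, s, rfl⟩ := (hO x).mp hx
    constructor
    · convert RingOfIntegers.isIntegral_coe (2 * p + r * c) using 1
      simp [h2]
      ring
    · convert RingOfIntegers.isIntegral_coe
        (p ^ 2 + c * p * r + n * r ^ 2 - a * (q ^ 2 + c * q * s + n * s ^ 2)) using 1
      simp [hn']
      ring
  · refine ⟨-(a ^ 2 * b ^ 2), ?_, Ideal.span_singleton_neg _⟩
    have he : e = ![1, i, ⟨(c : k) / 2, 0, 1 / 2, 0⟩, ⟨0, (c : k) / 2, 0, 1 / 2⟩] := by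
      simp only [e, hiβ]
      rw [hβ]
    have hM : M = !![2, 0, (c : k), 0;
        0, 2 * (a : k), 0, a * c;
        (c : k), 0, (c ^ 2 + b) / 2, 0;
        0, a * c, 0, a * (c ^ 2 - b) / 2] := by
      ext r s
      simp only [M, he]
      fin_cases r <;> fin_cases s <;> simp [i] <;> ring
    rw [hM]
    simp [Matrix.det_succ_row_zero, Fin.sum_univ_succ, Fin.succAbove]
    ring
end

section
/- Let m₁ ≤ m₂ ≤ m₃ ≤ m₄ be integers with each mᵢ ≥ 2, and let M be a positive integer divisible by lcm(m₁, m₂, m₃, m₄) such that, in ℚ, (m₁−1)/m₁ + (m₂−1)/m₂ + (m₃−1)/m₃ + (m₄−1)/m₄ = 2/M + 2. Then the mᵢ take at most two distinct values; i.e., the set {m₁, m₂, m₃, m₄} has cardinality at most 2. -/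
/-!
Write `M = mᵢ kᵢ`; the equation becomes `k₁ + k₂ + k₃ + k₄ = 2M - 2` in positive integers.
If `m₃ = 2`, then `m₁ = m₂ = m₃ = 2` and there are at most two values. Otherwise `m₃, m₄ ≥ 3`,
so `2M - 2 ≤ M/2 + M/2 + M/3 + M/3`, i.e. `M ≤ 6`, which leaves finitely many cases.
-/

/-- If `2 ≤ m₁ ≤ m₂ ≤ m₃ ≤ m₄` are integers and `M` is a positive integer divisible by
`lcm (m₁, m₂, m₃, m₄)` with `∑ (mᵢ − 1)/mᵢ = 2/M + 2` in `ℚ`, then the `mᵢ` take at most two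
distinct values. -/
theorem at_most_two_distinct_periods
    (m₁ m₂ m₃ m₄ M : ℤ) (h₁ : 2 ≤ m₁) (h₂ : 2 ≤ m₂) (h₃ : 2 ≤ m₃) (h₄ : 2 ≤ m₄)
    (h₁₂ : m₁ ≤ m₂) (h₂₃ : m₂ ≤ m₃) (h₃₄ : m₃ ≤ m₄)
    (hM : 0 < M) (hdvd : (Int.lcm m₁ (Int.lcm m₂ (Int.lcm m₃ m₄)) : ℤ) ∣ M)
    (heq : ((m₁ : ℚ) - 1) / m₁ + ((m₂ : ℚ) - 1) / m₂ + ((m₃ : ℚ) - 1) / m₃ +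
        ((m₄ : ℚ) - 1) / m₄ = 2 / M + 2) :
    ({m₁, m₂, m₃, m₄} : Finset ℤ).card ≤ 2 := by
  have d₁ : m₁ ∣ M := (Int.dvd_lcm_left _ _).trans hdvd
  have e₂ := (Int.dvd_lcm_right m₁ (Int.lcm m₂ (Int.lcm m₃ m₄))).trans hdvd
  have d₂ : m₂ ∣ M := (Int.dvd_lcm_left _ _).trans e₂
  have e₃ := (Int.dvd_lcm_right m₂ (Int.lcm m₃ m₄)).trans e₂
  have d₃ : m₃ ∣ M := (Int.dvd_lcm_left _ _).trans e₃
  have d₄ : m₄ ∣ M := (Int.dvd_lcm_right _ _).trans e₃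
  clear hdvd e₂ e₃
  obtain ⟨k₁, hk₁⟩ := d₁
  obtain ⟨k₂, hk₂⟩ := d₂
  obtain ⟨k₃, hk₃⟩ := d₃
  obtain ⟨k₄, hk₄⟩ := d₄
  have hMQ : (M : ℚ) ≠ 0 := by exact_mod_cast hM.ne'
  have frac : ∀ m k : ℤ, 2 ≤ m → M = m * k → ((m : ℚ) - 1) / m = 1 - k / M := by
    intro m k hm hk
    have hm' : (m : ℚ) ≠ 0 := by
      have : m ≠ 0 := by omega
      exact_mod_cast this
    have hk' : (M : ℚ) = m * k := by exact_mod_cast hk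
    field_simp
    linear_combination -hk'
  rw [frac _ _ h₁ hk₁, frac _ _ h₂ hk₂, frac _ _ h₃ hk₃, frac _ _ h₄ hk₄] at heq
  have hsum : k₁ + k₂ + k₃ + k₄ = 2 * M - 2 := by
    field_simp at heq
    have : (k₁ + k₂ + k₃ + k₄ : ℚ) = 2 * M - 2 := by linarith
    exact_mod_cast this
  have pos : ∀ m k : ℤ, 2 ≤ m → M = m * k → 0 < k := by
    intro m k hm hk
    exact pos_of_mul_pos_right (hk ▸ hM) (by omega)
  have p₁ := pos _ _ h₁ hk₁
  have p₂ := pos _ _ h₂ hk₂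
  have p₃ := pos _ _ h₃ hk₃
  have p₄ := pos _ _ h₄ hk₄
  by_cases h : m₃ = 2
  · obtain rfl : m₁ = 2 := by omega
    obtain rfl : m₂ = 2 := by omega
    subst h
    simpa using Finset.card_le_two (a := (2 : ℤ)) (b := m₄)
  · have b₁ : 2 * k₁ ≤ M := by nlinarith
    have b₂ : 2 * k₂ ≤ M := by nlinarith
    have b₃ : 3 * k₃ ≤ M := by
      have : 3 ≤ m₃ := by omega
      nlinarith
    have b₄ : 3 * k₄ ≤ M := by
      have : 3 ≤ m₄ := by omega
      nlinarith
    have hM6 : M ≤ 6 := by omega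
    have c₁ : k₁ ≤ 3 := by omega
    have c₂ : k₂ ≤ 3 := by omega
    have c₃ : k₃ ≤ 2 := by omega
    have c₄ : k₄ ≤ 2 := by omega
    -- The surviving cases force `m₁ = m₂` and `m₃ = m₄`.
    have key : m₁ = m₂ ∧ m₃ = m₄ := by
      clear heq hMQ frac pos
      interval_cases k₁ <;> interval_cases k₂ <;> interval_cases k₃ <;> interval_cases k₄ <;>
        omega
    obtain ⟨rfl, rfl⟩ := key
    simpa using Finset.card_le_two (a := m₁) (b := m₃)
end
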